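/- For every connected pseudograph with n vertices and k hanging edges, the number of valid orientations (every vertex outdegree exactly 2) is at most 24^{n/5} · 18^{-(k-1)/5}. -/

import Mathlib

theorem po_arith (d s : ℕ) (hd : 1 ≤ d) (hs : s ≤ 2) (hne : ¬ (d = 2 ∧ s = 1)) :
    (d.choose s) ^ 5 * 27 ≤ 2 * 18 ^ d := by
  have key1 : ∀ m : ℕ, (m + 3) ^ 5 * 27 ≤ 2 * 18 ^ (m + 3) := by
    intro m
    induction m with
    | zero => norm_num
    | succ m ih =>
      have : (m + 1 + 3) ^ 5 ≤ 18 * (m + 3) ^ 5 := by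
        have h1 : (m + 1 + 3) ^ 5 * 3 ^ 5 ≤ 4 ^ 5 * (m + 3) ^ 5 := by
          rw [← mul_pow, ← mul_pow]
          exact Nat.pow_le_pow_left (by omega) 5
        omega
      calc (m + 1 + 3) ^ 5 * 27 ≤ 18 * (m + 3) ^ 5 * 27 := by gcongr
        _ = 18 * ((m + 3) ^ 5 * 27) := by ring
        _ ≤ 18 * (2 * 18 ^ (m + 3)) := by gcongr
        _ = _ := by ring
  have key2 : ∀ m : ℕ, ((m + 4).choose 2) ^ 5 * 27 ≤ 2 * 18 ^ (m + 4) := by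
    intro m
    induction m with
    | zero => decide
    | succ m ih =>
      have h0 : (m + 1 + 4).choose 2 * 6 ≤ 10 * (m + 4).choose 2 := by
        have e : (m + 1 + 4).choose 2 = (m + 4) + (m + 4).choose 2 := by
          have := Nat.choose_succ_succ (m + 4) 1
          simpa using this
        have e2 : (m + 4).choose 2 * 2 = (m + 4) * (m + 3) := by
          rw [Nat.choose_two_right]
          exact Nat.div_mul_cancel (Nat.even_mul_pred_self (m + 4)).two_dvd
        nlinarith
      have : ((m + 1 + 4).choose 2) ^ 5 ≤ 18 * ((m + 4).choose 2) ^ 5 := by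
        have h1 : ((m + 1 + 4).choose 2) ^ 5 * 6 ^ 5 ≤ 10 ^ 5 * ((m + 4).choose 2) ^ 5 := by
          rw [← mul_pow, ← mul_pow]
          exact Nat.pow_le_pow_left h0 5
        omega
      calc ((m + 1 + 4).choose 2) ^ 5 * 27 ≤ 18 * ((m + 4).choose 2) ^ 5 * 27 := by gcongr
        _ = 18 * (((m + 4).choose 2) ^ 5 * 27) := by ring
        _ ≤ 18 * (2 * 18 ^ (m + 4)) := by gcongr
        _ = _ := by ring
  interval_cases s
  · have : 18 ^ 1 ≤ 18 ^ d := Nat.pow_le_pow_right (by norm_num) hd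
    simp
    omega
  · simp only [Nat.choose_one_right]
    rcases Nat.lt_or_ge d 3 with h | h
    · interval_cases d
      · norm_num
      · simp at hne
    · obtain ⟨m, rfl⟩ := Nat.exists_eq_add_of_le' h
      exact key1 m
  · rcases Nat.lt_or_ge d 4 with h | h
    · interval_cases d <;> decide
    · obtain ⟨m, rfl⟩ := Nat.exists_eq_add_of_le' h
      exact key2 m

/-- `D` is separated from the rest of the graph by the vertex `w`. -/
def POSep {V : Type*} (G : SimpleGraph V) (w : V) (D : Set V) : Prop :=
  D.Nonempty ∧ w ∉ D ∧ (∃ z, z ∉ D ∧ z ≠ w) ∧ ∀ x ∈ D, ∀ y, G.Adj x y → y ∈ D ∨ y = w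

theorem POSep.compl {V : Type*} {G : SimpleGraph V} {w : V} {D : Set V} (h : POSep G w D) :
    POSep G w {y | y ∉ D ∧ y ≠ w} := by
  obtain ⟨⟨a, ha⟩, hw, ⟨z, hz, hzw⟩, hcl⟩ := h
  refine ⟨⟨z, hz, hzw⟩, by simp, ⟨a, by simp [ha], fun e => hw (e ▸ ha)⟩, ?_⟩
  rintro x ⟨hx, hxw⟩ y hxy
  by_cases hy : y = w
  · exact Or.inr hy
  · refine Or.inl ⟨fun hyD => ?_, hy⟩
    rcases hcl y hyD x hxy.symm with h | h
    · exact hx h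
    · exact hxw h

theorem po_closed {V : Type*} {G : SimpleGraph V} (hG : G.Connected) (D : Set V)
    (hD : D.Nonempty) (hcl : ∀ x ∈ D, ∀ y, G.Adj x y → y ∈ D) (z : V) : z ∈ D := by
  obtain ⟨a, ha⟩ := hD
  obtain ⟨p⟩ := hG.preconnected a z
  induction p with
  | nil => exact ha
  | cons h p ih => exact ih (hcl _ ha _ h)

theorem po_exists_sep {V : Type*} [Nontrivial V] {G : SimpleGraph V} {w : V}
    (hw : ¬ (G.induce ({w}ᶜ : Set V)).Connected) : ∃ D, POSep G w D := by
  have hne : Nonempty ({w}ᶜ : Set V) := by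
    obtain ⟨y, hy⟩ := exists_ne w
    exact ⟨⟨y, hy⟩⟩
  have : ¬ (G.induce ({w}ᶜ : Set V)).Preconnected := fun h => hw ⟨h⟩
  simp only [SimpleGraph.Preconnected, not_forall] at this
  obtain ⟨a, b, hab⟩ := this
  refine ⟨{x | ∃ hx : x ∈ ({w}ᶜ : Set V), (G.induce ({w}ᶜ : Set V)).Reachable a ⟨x, hx⟩},
    ⟨a, a.2, SimpleGraph.Reachable.refl _⟩, ?_, ⟨b, ?_, b.2⟩, ?_⟩
  · rintro ⟨h, _⟩
    exact h rfl
  · rintro ⟨_, h⟩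
    exact hab h
  · rintro x ⟨hx, hr⟩ y hxy
    by_cases hy : y = w
    · exact Or.inr hy
    · refine Or.inl ⟨hy, hr.trans (SimpleGraph.Adj.reachable ?_)⟩
      exact hxy

theorem po_adj_of_sep {V : Type*} [Finite V] [Nontrivial V] {G : SimpleGraph V}
    (hG : G.Connected)
    (hdeg : ∀ v, (G.induce ({v}ᶜ : Set V)).Connected → (G.neighborSet v).ncard = 2) :
    ∀ (n : ℕ) (w : V) (D : Set V), D.ncard = n → POSep G w D →
      ∃ u v, G.Adj u v ∧ (G.induce ({u}ᶜ : Set V)).Connected ∧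
        (G.induce ({v}ᶜ : Set V)).Connected := by
  intro n
  induction n using Nat.strong_induction_on with
  | _ n ih =>
  intro w D hn hD
  by_cases hall : ∀ x ∈ D, (G.induce ({x}ᶜ : Set V)).Connected
  · obtain ⟨⟨a, ha⟩, hw, _, hcl⟩ := hD
    have h2 := hdeg a (hall a ha)
    obtain ⟨y, hy, hyw⟩ := Set.exists_ne_of_one_lt_ncard (by omega : 1 < (G.neighborSet a).ncard) w
    have hyD : y ∈ D := (hcl a ha y hy).resolve_right hyw
    exact ⟨a, y, hy, hall a ha, hall y hyD⟩
  · push Not at hall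
    obtain ⟨x, hxD, hx⟩ := hall
    have hwx : w ≠ x := fun e => hD.2.1 (e ▸ hxD)
    obtain ⟨E, hE, hwE⟩ : ∃ E, POSep G x E ∧ w ∉ E := by
      obtain ⟨E, hE⟩ := po_exists_sep hx
      by_cases hwE : w ∈ E
      · exact ⟨_, hE.compl, fun h => h.1 hwE⟩
      · exact ⟨E, hE, hwE⟩
    refine ih (E ∩ D).ncard ?_ x (E ∩ D) rfl ?_
    · rw [← hn]
      apply Set.ncard_lt_ncard _ (Set.toFinite _)
      refine ⟨Set.inter_subset_right, fun h => hE.2.1 (h hxD).1⟩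
    · refine ⟨?_, fun h => hE.2.1 h.1, ⟨w, fun h => hwE h.1, hwx⟩, ?_⟩
      · by_contra hemp
        have hemp' : ∀ y, y ∈ E → y ∉ D := fun y h1 h2 => hemp ⟨y, h1, h2⟩
        refine hE.2.1 (po_closed hG E hE.1 ?_ x)
        intro y hy z hyz
        rcases hE.2.2.2 y hy z hyz with h | h
        · exact h
        · subst h
          rcases hD.2.2.2 z hxD y hyz.symm with h | h
          · exact absurd h (hemp' y hy)
          · exact absurd (h ▸ hy) hwE
      · rintro y ⟨hyE, hyD⟩ z hyz
        rcases hE.2.2.2 y hyE z hyz with h | h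
        · refine Or.inl ⟨h, (hD.2.2.2 y hyD z hyz).resolve_right fun e => hwE (e ▸ h)⟩
        · exact Or.inr h

theorem po_exists_adj {V : Type*} [Finite V] [Nontrivial V] {G : SimpleGraph V}
    (hG : G.Connected)
    (hdeg : ∀ v, (G.induce ({v}ᶜ : Set V)).Connected → (G.neighborSet v).ncard = 2) :
    ∃ u v, G.Adj u v ∧ (G.induce ({u}ᶜ : Set V)).Connected ∧
        (G.induce ({v}ᶜ : Set V)).Connected := by
  by_cases hall : ∀ x, (G.induce ({x}ᶜ : Set V)).Connected
  · obtain ⟨a, -⟩ := exists_pair_ne V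
    obtain ⟨y, hy, -⟩ := Set.exists_ne_of_one_lt_ncard
      (by rw [hdeg a (hall a)]; norm_num : 1 < (G.neighborSet a).ncard) a
    exact ⟨a, y, hy, hall a, hall y⟩
  · push Not at hall
    obtain ⟨x, hx⟩ := hall
    obtain ⟨D, hD⟩ := po_exists_sep hx
    exact po_adj_of_sep hG hdeg _ x D rfl hD

/-- Valid orientations as relations, with `h v` hanging edges at each vertex `v`. -/
def POValid {V : Type*} (G : SimpleGraph V) (h : V → ℕ) : Set (V → V → Prop) :=
  {r | (∀ x y, r x y → ¬ r y x) ∧ (∀ x y, G.Adj x y ↔ r x y ∨ r y x) ∧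
    ∀ v, {y | r v y}.ncard + h v = 2}

open Classical in
/-- Hanging edges after the elimination of `v` with out-neighbourhood `T`. -/
noncomputable def poHang {V : Type*} (G : SimpleGraph V) (h : V → ℕ) (v : V) (T : Set V) :
    ({v}ᶜ : Set V) → ℕ :=
  fun y => h y + if G.Adj v y ∧ (y : V) ∉ T then 1 else 0

theorem po_restrict {V : Type*} [Finite V] {G : SimpleGraph V} {h : V → ℕ} {v : V}
    {r : V → V → Prop} (hr : r ∈ POValid G h) :
    (fun x y : ({v}ᶜ : Set V) => r x y) ∈
      POValid (G.induce ({v}ᶜ : Set V)) (poHang G h v {y | r v y}) := by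
  obtain ⟨h1, h2, h3⟩ := hr
  refine ⟨fun x y => h1 x y, fun x y => h2 x y, fun x => ?_⟩
  rw [← h3 x]
  have himg : {y : ({v}ᶜ : Set V) | r x y}.ncard = ({y | r x y} \ {v}).ncard := by
    rw [← Set.ncard_image_of_injective _ Subtype.val_injective]
    congr 1
    ext y
    simp [and_comm]
  rw [himg]
  unfold poHang
  have hiff : (G.Adj v x ∧ (x : V) ∉ {y | r v y}) ↔ r x v := by
    simp only [Set.mem_ofPred_eq]
    rw [h2]
    constructor
    · rintro ⟨a | a, b⟩
      · exact absurd a b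
      · exact a
    · intro a
      exact ⟨Or.inr a, h1 _ _ a⟩
  by_cases hxv : r x v
  · rw [if_pos (hiff.2 hxv)]
    have := Set.ncard_sdiff_singleton_add_one (s := {y | r x y}) (a := v) hxv (Set.toFinite _)
    omega
  · rw [if_neg (fun h => hxv (hiff.1 h))]
    rw [Set.sdiff_singleton_eq_self (by simpa using hxv)]
    omega

theorem po_fiber {V : Type*} [Finite V] {G : SimpleGraph V} {h : V → ℕ} (v : V) (T : Set V) :
    {r | r ∈ POValid G h ∧ {y | r v y} = T}.ncard ≤
      (POValid (G.induce ({v}ᶜ : Set V)) (poHang G h v T)).ncard := by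
  refine Set.ncard_le_ncard_of_injOn (fun r x y => r x y) ?_ ?_ (Set.toFinite _)
  · rintro r ⟨hr, rfl⟩
    exact po_restrict hr
  · rintro r ⟨hr, hrT⟩ r' ⟨hr', hrT'⟩ he
    have hv : ∀ y, r v y ↔ r' v y := fun y => by
      have : y ∈ {y | r v y} ↔ y ∈ {y | r' v y} := by rw [hrT, hrT']
      exact this
    ext x y
    by_cases hx : x = v
    · subst hx
      exact hv y
    by_cases hy : y = v
    · subst hy
      have key : ∀ s ∈ POValid G h, s x y ↔ (G.Adj y x ∧ ¬ s y x) := by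
        intro s hs
        rw [hs.2.1]
        constructor
        · intro a
          exact ⟨Or.inr a, hs.1 _ _ a⟩
        · rintro ⟨a | a, b⟩
          · exact absurd a b
          · exact a
      rw [key r hr, key r' hr', hv]
    · have := congrFun (congrFun he ⟨x, hx⟩) ⟨y, hy⟩
      exact iff_of_eq this

theorem po_sum_hang {V : Type*} [Fintype V] [DecidableEq V] (G : SimpleGraph V) (h : V → ℕ) (v : V)
    [Fintype ({v}ᶜ : Set V)]
    (T : Set V) (hT : T ⊆ G.neighborSet v) (hc : T.ncard + h v = 2) :
    ∑ y, poHang G h v T y + 2 = ∑ y, h y + (G.neighborSet v).ncard := by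
  classical
  have e1 : ∑ y, poHang G h v T y =
      ∑ y ∈ Finset.univ.erase v, (h y + if G.Adj v y ∧ y ∉ T then 1 else 0) := by
    unfold poHang
    rw [Finset.sum_subtype (Finset.univ.erase v) (p := fun y => y ∈ ({v}ᶜ : Set V)) (by simp)
      (fun y => h y + if G.Adj v y ∧ y ∉ T then 1 else 0)]
  have e2 : ∑ y ∈ Finset.univ.erase v, (if G.Adj v y ∧ y ∉ T then 1 else 0) =
      (G.neighborSet v \ T).ncard := by
    rw [Finset.sum_erase _ (by simp), ← Finset.card_filter, ← Set.ncard_coe_finset]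
    congr 1
    ext y
    simp
  rw [e1, Finset.sum_add_distrib, e2]
  have e3 := Finset.sum_erase_add Finset.univ h (Finset.mem_univ v)
  have e4 := Set.ncard_sdiff_add_ncard_of_subset hT (Set.toFinite _)
  omega

theorem po_elim {V : Type*} [Fintype V] (G : SimpleGraph V) (h : V → ℕ) (v : V)
    [Fintype ({v}ᶜ : Set V)] (hN : (POValid G h).ncard ≠ 0) :
    ∃ h' : ({v}ᶜ : Set V) → ℕ,
      ∑ y, h' y + 2 = ∑ y, h y + (G.neighborSet v).ncard ∧
      (POValid G h).ncard ≤ (POValid (G.induce ({v}ᶜ : Set V)) h').ncard *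
        ((G.neighborSet v).ncard.choose (2 - h v)) := by
  classical
  have hfin : (POValid G h).Finite := Set.toFinite _
  obtain ⟨r0, hr0⟩ := Set.nonempty_of_ncard_ne_zero hN
  set S : Finset (V → V → Prop) := hfin.toFinset with hS
  set t : Finset (Finset V) := (G.neighborFinset v).powersetCard (2 - h v) with ht
  let f : (V → V → Prop) → Finset V := fun r => Finset.univ.filter (fun y => r v y)
  have hf : ∀ r, ((f r : Finset V) : Set V) = {y | r v y} := by intro r; ext y; simp [f]
  have hmaps : ∀ r ∈ S, f r ∈ t := by
    intro r hr
    have hr' : r ∈ POValid G h := by simpa [S] using hr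
    rw [ht, Finset.mem_powersetCard]
    constructor
    · intro y hy
      simp only [f, Finset.mem_filter, Finset.mem_univ, true_and] at hy
      rw [SimpleGraph.mem_neighborFinset]
      exact (hr'.2.1 v y).2 (Or.inl hy)
    · have := hr'.2.2 v
      rw [← hf, Set.ncard_coe_finset] at this
      omega
  have htne : t.Nonempty := ⟨f r0, hmaps r0 (by simpa [S] using hr0)⟩
  obtain ⟨T, hTt, hTmax⟩ := Finset.exists_max_image t (fun T => (POValid
    (G.induce ({v}ᶜ : Set V)) (poHang G h v (T : Set V))).ncard) htne
  refine ⟨poHang G h v (T : Set V), ?_, ?_⟩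
  · rw [ht, Finset.mem_powersetCard] at hTt
    apply po_sum_hang
    · intro y hy
      have := hTt.1 hy
      simpa using this
    · rw [Set.ncard_coe_finset, hTt.2]
      have := hr0.2.2 v
      omega
  · have hcard : t.card = (G.neighborSet v).ncard.choose (2 - h v) := by
      rw [ht, Finset.card_powersetCard, ← Set.ncard_coe_finset]
      congr 2
      ext y
      simp
    rw [Set.ncard_eq_toFinset_card _ hfin, ← hcard]
    refine Finset.card_le_mul_card_image_of_maps_to hmaps _ ?_
    intro b hb
    refine le_trans ?_ (hTmax b hb)
    refine le_trans ?_ (po_fiber v (b : Set V))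
    rw [← Set.ncard_coe_finset]
    apply Set.ncard_le_ncard _ (Set.toFinite _)
    intro r hr
    simp only [Finset.coe_filter, Set.mem_ofPred_eq] at hr
    refine ⟨by simpa [S] using hr.1, ?_⟩
    rw [← hf, hr.2]

universe u

theorem po_main (n : ℕ) : ∀ (V : Type u) [Fintype V] (G : SimpleGraph V) (h : V → ℕ),
    G.Connected → Fintype.card V = n →
    (POValid G h).ncard ^ 5 * 18 ^ (∑ v, h v) ≤ 18 * 24 ^ n := by
  classical
  induction n using Nat.strong_induction_on with
  | _ n ih =>
  intro V _ G h hG hn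
  by_cases hN : (POValid G h).ncard = 0
  · rw [hN]
    simp
  have hcompl : ∀ v : V, Fintype.card ({v}ᶜ : Set V) + 1 = n := by
    intro v
    have hp : 0 < Fintype.card V := Fintype.card_pos_iff.2 ⟨v⟩
    rw [Fintype.card_compl_set]
    simp
    omega
  rcases subsingleton_or_nontrivial V with hsub | hnt
  · obtain ⟨v⟩ := hG.nonempty
    obtain ⟨r0, hr0⟩ := Set.nonempty_of_ncard_ne_zero hN
    have hno : ∀ r ∈ POValid G h, ∀ x y, ¬ r x y := by
      intro r hr x y hxy
      have hxy' := hxy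
      rw [Subsingleton.elim x y] at hxy'
      exact hr.1 y y hxy' hxy'
    have h1 : (POValid G h).ncard ≤ 1 := by
      rw [Set.ncard_le_one (Set.toFinite _)]
      intro a ha b hb
      ext x y
      exact iff_of_false (hno a ha x y) (hno b hb x y)
    have hv : h v = 2 := by
      have := hr0.2.2 v
      have he : {y | r0 v y} = ∅ := by
        ext y
        simpa using hno r0 hr0 v y
      rw [he] at this
      simpa using this
    have hn1 : n = 1 := by
      rw [← hn]
      exact Fintype.card_eq_one_iff.2 ⟨v, fun y => Subsingleton.elim _ _⟩
    have hs : ∑ x, h x = 2 := by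
      rw [Fintype.sum_subsingleton h v, hv]
    rw [hs, hn1]
    have : (POValid G h).ncard ^ 5 ≤ 1 ^ 5 := Nat.pow_le_pow_left h1 5
    omega
  · by_cases hex : ∃ v, (G.induce ({v}ᶜ : Set V)).Connected ∧
        ¬ ((G.neighborSet v).ncard = 2 ∧ 2 - h v = 1)
    · obtain ⟨v, hvc, hvn⟩ := hex
      obtain ⟨h', hsum, hle⟩ := po_elim G h v hN
      have hc := hcompl v
      have ihv := ih (n - 1) (by omega) _ (G.induce ({v}ᶜ : Set V)) h' hvc (by omega)
      have hd : 1 ≤ (G.neighborSet v).ncard := by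
        obtain ⟨w, hw⟩ := hG.preconnected.exists_adj_of_nontrivial v
        exact (Set.ncard_pos (Set.toFinite _)).2 ⟨w, hw⟩
      have har := po_arith _ (2 - h v) hd (by omega) hvn
      obtain ⟨m, rfl⟩ : ∃ m, n = m + 1 := ⟨n - 1, by omega⟩
      rw [Nat.add_sub_cancel] at ihv
      generalize (POValid G h).ncard = N at *
      generalize (POValid (G.induce ({v}ᶜ : Set V)) h').ncard = M at *
      generalize (G.neighborSet v).ncard = d at *
      generalize d.choose (2 - h v) = C at *
      generalize ∑ y, h' y = k' at *
      generalize ∑ y, h y = k at *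
      have h18 : 0 < 18 ^ d := by positivity
      refine Nat.le_of_mul_le_mul_right ?_ h18
      calc N ^ 5 * 18 ^ k * 18 ^ d = N ^ 5 * 18 ^ (k + d) := by ring
        _ = N ^ 5 * 18 ^ (k' + 2) := by rw [hsum]
        _ ≤ (M * C) ^ 5 * 18 ^ (k' + 2) := by gcongr
        _ = (M ^ 5 * 18 ^ k') * (C ^ 5 * 27) * 12 := by ring
        _ ≤ (18 * 24 ^ m) * (2 * 18 ^ d) * 12 := by gcongr
        _ = 18 * 24 ^ (m + 1) * 18 ^ d := by ring
    · push Not at hex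
      obtain ⟨u, w, huw, hu, hw⟩ := po_exists_adj hG (fun v hv => (hex v hv).1)
      obtain ⟨h', hsum, hle⟩ := po_elim G h u hN
      rw [(hex u hu).1] at hsum hle
      rw [(hex u hu).2] at hle
      set G' := G.induce ({u}ᶜ : Set V) with hG'
      let w' : ({u}ᶜ : Set V) := ⟨w, huw.ne'⟩
      have hdw : (G'.neighborSet w').ncard = 1 := by
        rw [← Set.ncard_image_of_injective _ Subtype.val_injective]
        have e : Subtype.val '' (G'.neighborSet w') = G.neighborSet w \ {u} := by
          ext y
          simp [hG', w', and_comm]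
        have := Set.ncard_sdiff_singleton_add_one (s := G.neighborSet w) (a := u) huw.symm
          (Set.toFinite _)
        rw [(hex w hw).1] at this
        rw [e]
        omega
      have hwc : (G'.induce ({w'}ᶜ : Set _)).Connected := by
        apply hu.induce_compl_singleton_of_degree_eq_one
        rw [← SimpleGraph.card_neighborSet_eq_degree, ← Nat.card_eq_fintype_card]
        exact hdw
      have hN' : (POValid G' h').ncard ≠ 0 := by
        intro h0
        rw [h0] at hle
        omega
      obtain ⟨h'', hsum', hle'⟩ := po_elim G' h' w' hN'
      rw [hdw] at hsum' hle'
      have hc1 : Nat.choose 1 (2 - h' w') ≤ 1 := by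
        rcases (2 - h' w') with _ | _ | k <;> simp [Nat.choose]
      have hc := hcompl u
      have hc2 : Fintype.card ({w'}ᶜ : Set ({u}ᶜ : Set V)) + 2 = n := by
        have hp : 0 < Fintype.card ({u}ᶜ : Set V) := Fintype.card_pos_iff.2 ⟨w'⟩
        have e : Fintype.card ({w'}ᶜ : Set ({u}ᶜ : Set V)) =
            Fintype.card ({u}ᶜ : Set V) - 1 := by
          rw [Fintype.card_compl_set, Set.card_singleton]
        omega
      have ihv := ih (n - 2) (by omega) _ (G'.induce ({w'}ᶜ : Set _)) h'' hwc (by omega)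
      obtain ⟨m, rfl⟩ : ∃ m, n = m + 2 := ⟨n - 2, by omega⟩
      rw [Nat.add_sub_cancel] at ihv
      have hle2 := hle'.trans (Nat.mul_le_mul_left _ hc1)
      rw [mul_one] at hle2
      simp only [Nat.choose_one_right] at hle
      have hNN := hle.trans (Nat.mul_le_mul_right 2 hle2)
      have hk : ∑ y, h y = ∑ y, h'' y + 1 := by omega
      rw [hk]
      generalize (POValid G h).ncard = N at *
      generalize (POValid (G'.induce ({w'}ᶜ : Set _)) h'').ncard = M at *
      generalize ∑ y, h'' y = k' at *
      calc N ^ 5 * 18 ^ (k' + 1) ≤ (M * 2) ^ 5 * 18 ^ (k' + 1) := by gcongr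
        _ = (M ^ 5 * 18 ^ k') * 576 := by ring
        _ ≤ (18 * 24 ^ m) * 576 := by gcongr
        _ = 18 * 24 ^ (m + 2) := by ring

theorem po_link {V H : Type*} [Fintype V] [Fintype H]
    (G : SimpleGraph V) (hend : H → V) :
    Set.ncard {o : G.edgeSet → V |
        (∀ e : G.edgeSet, o e ∈ (e : Sym2 V)) ∧
        ∀ v : V, Set.ncard {e : G.edgeSet | o e = v}
          + Set.ncard {h : H | hend h = v} = 2} ≤
    (POValid G (fun v => Set.ncard {h : H | hend h = v})).ncard := by
  refine Set.ncard_le_ncard_of_injOn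
    (fun o x y => ∃ he : s(x, y) ∈ G.edgeSet, o ⟨s(x, y), he⟩ = x) ?_ ?_ (Set.toFinite _)
  · rintro o ⟨ho, hdeg⟩
    refine ⟨?_, ?_, ?_⟩
    · rintro x y ⟨he, hx⟩ ⟨he', hy⟩
      have e : (⟨s(x, y), he⟩ : G.edgeSet) = ⟨s(y, x), he'⟩ := Subtype.ext Sym2.eq_swap
      rw [e, hy] at hx
      subst hx
      exact G.loopless.irrefl _ he
    · intro x y
      constructor
      · intro hxy
        have he : s(x, y) ∈ G.edgeSet := hxy
        have he' : s(y, x) ∈ G.edgeSet := hxy.symm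
        have e : (⟨s(x, y), he⟩ : G.edgeSet) = ⟨s(y, x), he'⟩ := Subtype.ext Sym2.eq_swap
        have := ho ⟨s(x, y), he⟩
        rw [Sym2.mem_iff] at this
        rcases this with h | h
        · exact Or.inl ⟨he, h⟩
        · exact Or.inr ⟨he', e ▸ h⟩
      · rintro (⟨he, _⟩ | ⟨he, _⟩)
        · exact he
        · exact SimpleGraph.Adj.symm he
    · intro v
      rw [← hdeg v]
      congr 1
      refine Set.ncard_congr (fun y hy => ⟨s(v, y), hy.1⟩) ?_ ?_ ?_
      · rintro y ⟨he, hy⟩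
        exact hy
      · rintro y z hy hz hyz
        have h1 : s(v, y) = s(v, z) := congrArg Subtype.val hyz
        exact Sym2.congr_right.1 h1
      · rintro ⟨e, he⟩ hev
        have hm := ho ⟨e, he⟩
        rw [show o ⟨e, he⟩ = v from hev] at hm
        obtain ⟨y, rfl⟩ := hm
        exact ⟨y, ⟨he, hev⟩, rfl⟩
  · rintro o ⟨ho, _⟩ o' ⟨ho', _⟩ heq
    ext ⟨e, he⟩
    have hm := ho ⟨e, he⟩
    obtain ⟨y, hy⟩ := hm
    generalize hx : o ⟨e, he⟩ = x at hy
    change e = _ at hy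
    subst hy
    have := congrFun (congrFun heq x) y
    have h2 : ∃ he : s(x, y) ∈ G.edgeSet, o' ⟨s(x, y), he⟩ = x := by
      exact (iff_of_eq this).1 ⟨he, hx⟩
    exact h2.2.symm

/-- Theorem 3.8: for every connected pseudograph with `n` vertices and `k`
hanging edges (normal subgraph `G`, hanging edges `H` with endpoint map
`hend`), the number of valid orientations — orientations of the normal edges,
each edge getting a source among its endpoints, in which every vertex has
total outdegree exactly 2 (hanging edges counting as outgoing) — is at most
`24^(n/5) · 18^(-(k-1)/5)`. -/
theorem pseudograph_valid_orientation_bound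
    {V H : Type*} [Fintype V] [Fintype H]
    (G : SimpleGraph V) (hend : H → V)
    (hconn : G.Connected) :
    (Set.ncard {o : G.edgeSet → V |
        (∀ e : G.edgeSet, o e ∈ (e : Sym2 V)) ∧
        ∀ v : V, Set.ncard {e : G.edgeSet | o e = v}
          + Set.ncard {h : H | hend h = v} = 2} : ℝ)
      ≤ (24 : ℝ) ^ ((Fintype.card V : ℝ) / 5) *
        (18 : ℝ) ^ (-(((Fintype.card H : ℝ) - 1) / 5)) := by
  classical
  have hm := po_main (Fintype.card V) V G (fun v => Set.ncard {h : H | hend h = v}) hconn rfl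
  have hk : ∑ v, Set.ncard {h : H | hend h = v} = Fintype.card H := by
    rw [← Finset.card_univ, Finset.card_eq_sum_card_fiberwise (f := hend) (t := Finset.univ)
      (by intro x _; simp)]
    refine Finset.sum_congr rfl fun v _ => ?_
    rw [← Set.ncard_coe_finset]
    congr 1
    ext x
    simp
  rw [hk] at hm
  have hl := po_link G hend
  generalize Set.ncard {o : G.edgeSet → V |
        (∀ e : G.edgeSet, o e ∈ (e : Sym2 V)) ∧
        ∀ v : V, Set.ncard {e : G.edgeSet | o e = v}
          + Set.ncard {h : H | hend h = v} = 2} = N at *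
  have hN : N ^ 5 * 18 ^ Fintype.card H ≤ 18 * 24 ^ Fintype.card V :=
    le_trans (Nat.mul_le_mul_right _ (Nat.pow_le_pow_left hl 5)) hm
  have hR : (N : ℝ) ^ 5 * 18 ^ Fintype.card H ≤ 18 * 24 ^ Fintype.card V := by exact_mod_cast hN
  refine le_of_pow_le_pow_left₀ (n := 5) (by norm_num) (by positivity) ?_
  rw [mul_pow, ← Real.rpow_natCast (24 ^ _) 5, ← Real.rpow_natCast (18 ^ _) 5,
    ← Real.rpow_mul (by norm_num), ← Real.rpow_mul (by norm_num)]
  have e1 : (Fintype.card V : ℝ) / 5 * ((5 : ℕ) : ℝ) = (Fintype.card V : ℝ) := by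
    push_cast; ring
  have e2 : -(((Fintype.card H : ℝ) - 1) / 5) * ((5 : ℕ) : ℝ) = 1 - (Fintype.card H : ℝ) := by
    push_cast; ring
  rw [e1, e2, Real.rpow_sub (by norm_num), Real.rpow_natCast, Real.rpow_natCast, Real.rpow_one,
    ← mul_div_assoc, le_div_iff₀ (by positivity)]
  linarith
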